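/- Let t ∈ (0,1) be irrational. Then for infinitely many n ∈ ℕ and every z ∈ [0,1+t], all distinct words a, a' ∈ {1,2,3,4}^n satisfy |φ_a(z) − φ_{a'}(z)| ≥ 1/(8·4^n). -/

import Mathlib

/-- The four maps of the IFS `Φ_t`. -/
noncomputable def phiMap (t : ℝ) : Fin 4 → ℝ → ℝ :=
  ![fun x => x / 2, fun x => (x + 1) / 2, fun x => (x + t) / 2, fun x => (x + 1 + t) / 2]

/-- Composition of the IFS maps along a word, `φ_a = φ_{a_1} ∘ ⋯ ∘ φ_{a_n}`. -/
noncomputable def phiWord (t : ℝ) (a : List (Fin 4)) : ℝ → ℝ :=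
  a.foldr (fun i f => phiMap t i ∘ f) id

/-!
For distinct words of length `n`, `φ_a(z) - φ_{a'}(z) = (q t - p) / 2 ^ n` with integers `p`, `q`
not both zero and `|q| < 2 ^ n`. If a reduced fraction `r` with denominator `D` satisfies
`|t - r| ≤ 1 / D ^ 2` and `2 |q| ≤ D`, then `q r ≠ p`, hence `|q r - p| ≥ 1 / D` and
`|q t - p| ≥ 1 / D - |q| / D ^ 2 ≥ 1 / (2 D)`. By Dirichlet's theorem `D` can be taken arbitrarily
large, and the `n` with `2 ^ (n + 1) ≤ D < 2 ^ (n + 2)` is then a good level.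
-/

section DiophantineSeparation

lemma exists_rat_lt_den_and_abs_sub_le {t : ℝ} (ht : Irrational t) (N : ℕ) :
    ∃ r : ℚ, N < r.den ∧ |t - r| ≤ 1 / (r.den : ℝ) ^ 2 := by
  have hfar : ∀ᶠ ε in nhdsWithin (0 : ℝ) (Set.Ioi 0), ∀ r : ℚ, r.den ≤ N → ε ≤ dist t r :=
    (ht.eventually_forall_le_dist_cast_rat_of_den_le N).filter_mono nhdsWithin_le_nhds
  obtain ⟨ε, hε_far, hε⟩ := (hfar.and self_mem_nhdsWithin).exists
  obtain ⟨m, hm⟩ := exists_nat_one_div_lt hε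
  obtain ⟨r, hr, hden⟩ := Real.exists_rat_abs_sub_le_and_den_le t m.succ_pos
  have hden_pos : (1 : ℝ) ≤ r.den := by exact_mod_cast r.den_pos
  have hden_le : (r.den : ℝ) ≤ m + 1 := by exact_mod_cast hden
  push_cast at hr
  refine ⟨r, ?_, hr.trans ?_⟩
  · by_contra! hN
    have hclose : |t - r| < ε :=
      calc |t - r| ≤ 1 / ((m + 1 + 1) * r.den : ℝ) := hr
        _ ≤ 1 / (m + 1 : ℝ) := by gcongr; nlinarith
        _ < ε := hm
    exact (hε_far r hN).not_gt hclose
  · gcongr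
    nlinarith

lemma mul_den_ne_mul_num {r : ℚ} {p q : ℤ} (hpq : (p, q) ≠ 0) (hq : |q| < r.den) :
    p * r.den ≠ q * r.num := by
  intro h
  have hdvd : (r.den : ℤ) ∣ q :=
    r.isCoprime_num_den.symm.dvd_of_dvd_mul_right ⟨p, by rw [← h, mul_comm]⟩
  have hq_zero : q = 0 := Int.eq_zero_of_abs_lt_dvd hdvd hq
  simp_all

variable {K : Type*} [Field K] [LinearOrder K] [IsStrictOrderedRing K]

lemma one_div_den_le_abs_mul_sub {r : ℚ} {p q : ℤ} (hpq : (p, q) ≠ 0) (hq : |q| < r.den) :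
    1 / (r.den : K) ≤ |q * (r : K) - p| := by
  have hden : (0 : K) < r.den := by exact_mod_cast r.den_pos
  have hdet : 1 ≤ |q * r.num - p * r.den| :=
    Int.one_le_abs (sub_ne_zero.2 (mul_den_ne_mul_num hpq hq).symm)
  have hr : q * (r : K) - p = (q * r.num - p * r.den) / r.den := by
    rw [Rat.cast_def]
    field_simp
  rw [hr, abs_div, abs_of_pos hden]
  gcongr
  exact_mod_cast hdet

lemma one_div_den_sub_le_abs_mul_sub (t : K) {r : ℚ} {p q : ℤ} (hpq : (p, q) ≠ 0)
    (hq : |q| < r.den) :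
    1 / (r.den : K) - |(q : K)| * |t - r| ≤ |q * t - p| :=
  calc 1 / (r.den : K) - |(q : K)| * |t - r| ≤ |q * (r : K) - p| - |q * (t - r)| := by
        rw [abs_mul]
        gcongr
        exact one_div_den_le_abs_mul_sub hpq hq
    _ ≤ |q * (r : K) - p + q * (t - r)| := by
        simpa using abs_sub_abs_le_abs_sub (q * (r : K) - p) (-(q * (t - r)))
    _ = |q * t - p| := by ring_nf

lemma one_div_two_mul_den_le_abs_mul_sub {t : K} {r : ℚ}
    (hr : |t - r| ≤ 1 / (r.den : K) ^ 2) {p q : ℤ} (hpq : (p, q) ≠ 0) (hq : 2 * |q| ≤ r.den) :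
    1 / (2 * r.den : K) ≤ |q * t - p| := by
  have hq_le : |(q : K)| ≤ r.den / 2 := by
    rw [le_div_iff₀' two_pos]
    exact_mod_cast hq
  have hq_lt : |q| < r.den := by
    have := r.den_pos
    lia
  calc 1 / (2 * r.den : K) = 1 / r.den - r.den / 2 * (1 / (r.den : K) ^ 2) := by
        field_simp
        norm_num
    _ ≤ 1 / r.den - |(q : K)| * |t - r| := by gcongr
    _ ≤ |q * t - p| := one_div_den_sub_le_abs_mul_sub t hpq hq_lt

end DiophantineSeparation

section WordValue

variable {ι : Type*}

/-- The number written in base `b` by the digits `d i`, for `i` running along a word, with the most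
significant digit first. -/
def wordValue (b : ℕ) (d : ι → ℕ) (l : List ι) : ℕ :=
  Nat.ofDigits b (l.map d).reverse

@[simp]
lemma wordValue_nil (b : ℕ) (d : ι → ℕ) : wordValue b d [] = 0 := by
  simp [wordValue]

@[simp]
lemma wordValue_cons (b : ℕ) (d : ι → ℕ) (i : ι) (l : List ι) :
    wordValue b d (i :: l) = wordValue b d l + b ^ l.length * d i := by
  simp [wordValue, Nat.ofDigits_append]

lemma wordValue_lt {b : ℕ} (hb : 1 < b) {d : ι → ℕ} (hd : ∀ i, d i < b) (l : List ι) :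
    wordValue b d l < b ^ l.length := by
  simpa [wordValue] using
    Nat.ofDigits_lt_base_pow_length (l := (l.map d).reverse) hb (by simp [hd])

lemma map_eq_map_of_wordValue_eq {b : ℕ} (hb : 1 < b) {d : ι → ℕ} (hd : ∀ i, d i < b)
    {l m : List ι} (hlen : l.length = m.length) (h : wordValue b d l = wordValue b d m) :
    l.map d = m.map d :=
  List.reverse_injective <|
    Nat.ofDigits_inj_of_len_eq hb (by simp [hlen]) (by simp [hd]) (by simp [hd]) h

end WordValue

section Words

/-- The integer `u ∈ {0, 1}` such that `phiMap t i x = (x + u + t * v) / 2`, where `v` is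
`paramDigit i`. -/
def unitDigit (i : Fin 4) : ℕ := i % 2

/-- The integer `v ∈ {0, 1}` such that `phiMap t i x = (x + u + t * v) / 2`, where `u` is
`unitDigit i`. -/
def paramDigit (i : Fin 4) : ℕ := i / 2

lemma unitDigit_lt_two (i : Fin 4) : unitDigit i < 2 := by
  unfold unitDigit; lia

lemma paramDigit_lt_two (i : Fin 4) : paramDigit i < 2 := by
  unfold paramDigit; lia

lemma injective_unitDigit_paramDigit :
    Function.Injective fun i => (unitDigit i, paramDigit i) := by
  decide

lemma phiMap_eq (t : ℝ) (i : Fin 4) (x : ℝ) :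
    phiMap t i x = (x + unitDigit i + t * paramDigit i) / 2 := by
  fin_cases i <;> simp [phiMap, unitDigit, paramDigit]

lemma phiWord_cons (t : ℝ) (i : Fin 4) (l : List (Fin 4)) (z : ℝ) :
    phiWord t (i :: l) z = phiMap t i (phiWord t l z) :=
  rfl

lemma phiWord_eq (t : ℝ) (l : List (Fin 4)) (z : ℝ) :
    phiWord t l z =
      (z + wordValue 2 unitDigit l + t * wordValue 2 paramDigit l) / 2 ^ l.length := by
  induction l with
  | nil => simp [phiWord]
  | cons i l ih =>
    rw [phiWord_cons, phiMap_eq, ih, wordValue_cons, wordValue_cons, List.length_cons]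
    push_cast
    field_simp
    ring

lemma eq_of_wordValue_eq {l m : List (Fin 4)} (hlen : l.length = m.length)
    (hunit : wordValue 2 unitDigit l = wordValue 2 unitDigit m)
    (hparam : wordValue 2 paramDigit l = wordValue 2 paramDigit m) : l = m := by
  apply injective_unitDigit_paramDigit.list_map
  rw [← List.zip_map', ← List.zip_map',
    map_eq_map_of_wordValue_eq one_lt_two unitDigit_lt_two hlen hunit,
    map_eq_map_of_wordValue_eq one_lt_two paramDigit_lt_two hlen hparam]

lemma exists_phiWord_sub_phiWord_eq (t : ℝ) {n : ℕ} {l m : List (Fin 4)} (hl : l.length = n)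
    (hm : m.length = n) (hne : l ≠ m) :
    ∃ p q : ℤ, (p, q) ≠ 0 ∧ |q| < 2 ^ n ∧
      ∀ z, phiWord t l z - phiWord t m z = (q * t - p) / 2 ^ n := by
  refine ⟨wordValue 2 unitDigit m - wordValue 2 unitDigit l,
    wordValue 2 paramDigit l - wordValue 2 paramDigit m, ?_, ?_, fun z => ?_⟩
  · intro hzero
    obtain ⟨hunit, hparam⟩ := Prod.ext_iff.1 hzero
    refine hne (eq_of_wordValue_eq (hl.trans hm.symm) ?_ ?_)
    · exact_mod_cast (sub_eq_zero.1 hunit).symm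
    · exact_mod_cast sub_eq_zero.1 hparam
  · have hl_lt := wordValue_lt one_lt_two paramDigit_lt_two l
    have hm_lt := wordValue_lt one_lt_two paramDigit_lt_two m
    rw [hl] at hl_lt
    rw [hm] at hm_lt
    zify at hl_lt hm_lt
    exact abs_sub_lt_of_nonneg_of_lt (by positivity) hl_lt (by positivity) hm_lt
  · rw [phiWord_eq, phiWord_eq, hl, hm]
    push_cast
    ring

lemma one_div_le_abs_phiWord_sub {t : ℝ} {r : ℚ} (hr : |t - r| ≤ 1 / (r.den : ℝ) ^ 2) {n : ℕ}
    (hn : 2 ^ (n + 1) ≤ r.den) {l m : List (Fin 4)} (hl : l.length = n) (hm : m.length = n)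
    (hne : l ≠ m) (z : ℝ) :
    1 / (2 * r.den * 2 ^ n : ℝ) ≤ |phiWord t l z - phiWord t m z| := by
  obtain ⟨p, q, hpq, hq, hsub⟩ := exists_phiWord_sub_phiWord_eq t hl hm hne
  have hq_den : 2 * |q| ≤ r.den := by
    zify at hn
    rw [pow_succ] at hn
    linarith
  rw [hsub, abs_div, abs_of_pos (by positivity : (0 : ℝ) < 2 ^ n), ← div_div]
  gcongr
  exact one_div_two_mul_den_le_abs_mul_sub hr hpq hq_den

end Words

theorem infinitely_many_good_levels_general (t : ℝ) (ht : Irrational t) :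
    {n : ℕ | ∀ z : ℝ, ∀ a a' : Fin n → Fin 4, a ≠ a' →
      1 / (8 * 4 ^ n) ≤
        |phiWord t (List.ofFn a) z - phiWord t (List.ofFn a') z|}.Infinite := by
  refine Set.infinite_of_forall_exists_gt fun N => ?_
  obtain ⟨r, hden, hr⟩ := exists_rat_lt_den_and_abs_sub_le ht (2 ^ (N + 2))
  obtain ⟨k, hk, hk'⟩ := exists_nat_pow_near (Nat.one_le_of_lt hden) one_lt_two
  have hNk : N + 2 < k + 1 := (Nat.pow_lt_pow_iff_right one_lt_two).1 (hden.trans hk')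
  obtain ⟨n, rfl⟩ : ∃ n, k = n + 1 := ⟨k - 1, by lia⟩
  refine ⟨n, fun z a a' hne => ?_, by lia⟩
  have hden_le : (r.den : ℝ) ≤ 2 ^ (n + 1 + 1) := by exact_mod_cast hk'.le
  calc 1 / (8 * 4 ^ n : ℝ) = 1 / (2 * 2 ^ (n + 1 + 1) * 2 ^ n) := by
        rw [show (4 : ℝ) = 2 * 2 by norm_num, mul_pow]
        ring
    _ ≤ 1 / (2 * r.den * 2 ^ n) := by gcongr
    _ ≤ |phiWord t (List.ofFn a) z - phiWord t (List.ofFn a') z| :=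
      one_div_le_abs_phiWord_sub hr hk List.length_ofFn List.length_ofFn
        (List.ofFn_injective.ne hne) z

/-- For irrational `t ∈ (0,1)`, for infinitely many `n` the level-`n` images of every
`z ∈ [0,1+t]` are pairwise at distance at least `1/(8·4^n)`. -/
theorem infinitely_many_good_levels (t : ℝ) (ht : Irrational t)
    (ht01 : t ∈ Set.Ioo (0:ℝ) 1) :
    {n : ℕ | ∀ z ∈ Set.Icc (0:ℝ) (1 + t), ∀ a a' : Fin n → Fin 4, a ≠ a' →
      1 / (8 * 4 ^ n) ≤
        |phiWord t (List.ofFn a) z - phiWord t (List.ofFn a') z|}.Infinite :=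
  (infinitely_many_good_levels_general t ht).mono <|
    Set.ofPred_subset_ofPred.2 fun _ hgood z _ => hgood z
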